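/- arXiv:1412.6657 — 2 statements merged into one kernel-verified Lean document; each statement's English description precedes it below -/
import Mathlib

section
/- Suppose K has the following Ramsey-type property: for any A ∈ K there is an extension A' ∈ K such that for any B₁ ∈ K with A' ≤ B₁ there exists an extension B₂ ∈ K of B₁ with B₂ → (B₁)^A_2, i.e. every 2-coloring of the copies of A in B₂ is monochromatic on the copies of A inside some copy of B₁ in B₂. Then K has the weak amalgamation property. -/
open FirstOrder FirstOrder.Language CategoryTheory Set

universe u v

namespace Paper


variable {L : FirstOrder.Language.{u, v}}

/-- `A` is an amalgamation base for the class `K`: any two extensions of `A` in `K`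
have a common extension in `K` amalgamating the embeddings over `A`. -/
def IsAmalgamationBase (K : Set (Bundled.{0} L.Structure)) (A : Bundled.{0} L.Structure) : Prop :=
  A ∈ K ∧ ∀ (B C : Bundled.{0} L.Structure) (f : A ↪[L] B) (g : A ↪[L] C),
    B ∈ K → C ∈ K → ∃ (D : Bundled.{0} L.Structure) (f' : B ↪[L] D) (g' : C ↪[L] D),
      D ∈ K ∧ f'.comp f = g'.comp g

/-- Truss' condition: every element of `K` extends to an amalgamation base. -/
def TrussCondition (K : Set (Bundled.{0} L.Structure)) : Prop :=
  ∀ A ∈ K, ∃ B : Bundled.{0} L.Structure, IsAmalgamationBase K B ∧ Nonempty (A ↪[L] B)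

/-- `C` is a cofinal subclass of `K`. -/
def IsCofinalIn (C K : Set (Bundled.{0} L.Structure)) : Prop :=
  C ⊆ K ∧ ∀ A ∈ K, ∃ B ∈ C, Nonempty (A ↪[L] B)

/-- The weak amalgamation property. -/
def WeakAmalgamation (K : Set (Bundled.{0} L.Structure)) : Prop :=
  ∀ A ∈ K, ∃ (A' : Bundled.{0} L.Structure) (i : A ↪[L] A'), A' ∈ K ∧
    ∀ (B₁ B₂ : Bundled.{0} L.Structure) (f₁ : A' ↪[L] B₁) (f₂ : A' ↪[L] B₂),
      B₁ ∈ K → B₂ ∈ K →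
      ∃ (D : Bundled.{0} L.Structure) (g₁ : B₁ ↪[L] D) (g₂ : B₂ ↪[L] D),
        D ∈ K ∧ (g₁.comp f₁).comp i = (g₂.comp f₂).comp i

/-- The set of copies of `A` inside a structure `C`: substructures of `C` isomorphic to `A`. -/
def copies (A : Bundled.{0} L.Structure) (C : Type) [L.Structure C] :
    Set (L.Substructure C) :=
  {S | Nonempty (A ≃[L] S)}

/-- The Ramsey property for a class of finite structures, phrased with copies:
for every `k` and every pair `A ≤ B` in the class there is `C₀` in the class such that
every `k`-coloring of the copies of `A` in `C₀` is monochromatic on the copies of `A`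
lying inside some copy of `B` in `C₀`. -/
def RamseyProperty (C : Set (Bundled.{0} L.Structure)) : Prop :=
  ∀ (k : ℕ), ∀ A ∈ C, ∀ B ∈ C, Nonempty (A ↪[L] B) →
    ∃ C₀ ∈ C, ∀ ξ : L.Substructure C₀ → Fin (k + 1),
      ∃ B' ∈ copies B C₀, ∀ S₁ ∈ copies A C₀, ∀ S₂ ∈ copies A C₀,
        S₁ ≤ B' → S₂ ≤ B' → ξ S₁ = ξ S₂

/-- `k` is a bound for the embedding Ramsey degree of `A` in the class `K`. -/
def EmbRamseyDegBound (K : Set (Bundled.{0} L.Structure)) (A : Bundled.{0} L.Structure)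
    (k : ℕ) : Prop :=
  ∀ (r : ℕ), ∀ B ∈ K, Nonempty (A ↪[L] B) →
    ∃ C ∈ K, ∀ ξ : (A ↪[L] C) → Fin (r + 1),
      ∃ h : B ↪[L] C, (Set.range fun e : A ↪[L] B => ξ (h.comp e)).ncard ≤ k

/-- The embedding Ramsey degree of `A` in `K`, as an extended natural number
(`⊤` if no finite bound exists). -/
noncomputable def embRamseyDegree (K : Set (Bundled.{0} L.Structure))
    (A : Bundled.{0} L.Structure) : ℕ∞ :=
  sInf {n : ℕ∞ | ∃ k : ℕ, n = k ∧ EmbRamseyDegBound K A k}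

/-- `k` is a bound for the (copy) Ramsey degree of `A` in the class `K`. -/
def RamseyDegBound (K : Set (Bundled.{0} L.Structure)) (A : Bundled.{0} L.Structure)
    (k : ℕ) : Prop :=
  ∀ (r : ℕ), ∀ B ∈ K, Nonempty (A ↪[L] B) →
    ∃ C ∈ K, ∀ ξ : L.Substructure C → Fin (r + 1),
      ∃ B' ∈ copies B (C : Type), (ξ '' {S | S ∈ copies A (C : Type) ∧ S ≤ B'}).ncard ≤ k

/-- `A` has finite (copy) Ramsey degree in `K`. -/
def HasFinRamseyDeg (K : Set (Bundled.{0} L.Structure)) (A : Bundled.{0} L.Structure) : Prop :=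
  ∃ k : ℕ, RamseyDegBound K A k

variable {L : FirstOrder.Language.{u, v}}

/-- The space of candidate `L`-structures on `ω`, for a relational language:
a point records, for each relation symbol, which tuples satisfy it.  It carries
the product topology (with `Bool` discrete), which is the standard logic topology. -/
abbrev StructureSpace (L : FirstOrder.Language.{u, v}) : Type v :=
  ∀ n : ℕ, L.Relations n → (Fin n → ℕ) → Bool

/-- The `L`-structure on `ℕ` coded by a point of the structure space. -/
def pointStructure [L.IsRelational] (x : StructureSpace L) : L.Structure ℕ where
  funMap := fun f _ => isEmptyElim f
  RelMap := fun {n} R t => x n R t = true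

/-- The point of the structure space coding a given `L`-structure on `ℕ`. -/
noncomputable def ofStructure (N : L.Structure ℕ) : StructureSpace L :=
  fun n R t => @decide (@Structure.RelMap L ℕ N n R t) (Classical.propDecidable _)

/-- The logic action of `S∞ = Perm ℕ` on the space of structures. -/
def permSMul (g : Equiv.Perm ℕ) (x : StructureSpace L) : StructureSpace L :=
  fun n R t => x n R fun i => g.symm (t i)

@[simp] theorem permSMul_one (x : StructureSpace L) : permSMul 1 x = x := rfl

theorem permSMul_mul (g h : Equiv.Perm ℕ) (x : StructureSpace L) :
    permSMul (g * h) x = permSMul g (permSMul h x) := rfl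

/-- The automorphism group of (the structure coded by) `x`, as a subgroup of `S∞`. -/
def autGroup (x : StructureSpace L) : Subgroup (Equiv.Perm ℕ) where
  carrier := {g | permSMul g x = x}
  one_mem' := permSMul_one x
  mul_mem' := by
    intro a b ha hb
    show permSMul (a * b) x = x
    rw [permSMul_mul, hb, ha]
  inv_mem' := by
    intro a ha
    show permSMul a⁻¹ x = x
    conv_lhs => rw [← ha]
    rw [← permSMul_mul, inv_mul_cancel, permSMul_one]

/-- The topology of pointwise convergence on `S∞` (and hence, by restriction, on
automorphism groups of structures with universe `ℕ`). -/
instance : TopologicalSpace (Equiv.Perm ℕ) :=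
  TopologicalSpace.induced
    (fun g => ((g : ℕ → ℕ), ((g⁻¹ : Equiv.Perm ℕ) : ℕ → ℕ))) inferInstance

/-- The age of the structure coded by a point of the structure space. -/
def agePoint [L.IsRelational] (x : StructureSpace L) : Set (Bundled.{0} L.Structure) :=
  @FirstOrder.Language.age L ℕ (pointStructure x)

/-- The subspace of the structure space consisting of structures whose age is contained
in `K`. -/
def spaceOf [L.IsRelational] (K : Set (Bundled.{0} L.Structure)) : Set (StructureSpace L) :=
  {x | agePoint x ⊆ K}

/-- `x` is a generic point for `K` : it lies in the space of structures with age `⊆ K`,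
and its `S∞`-orbit is comeagre there. -/
def IsGenericPoint [L.IsRelational] (K : Set (Bundled.{0} L.Structure))
    (x : StructureSpace L) : Prop :=
  x ∈ spaceOf K ∧
    {y : ↥(spaceOf K) | ∃ g : Equiv.Perm ℕ, (y : StructureSpace L) = permSMul g x} ∈
      residual ↥(spaceOf K)

/-- A topological group is extremely amenable if every continuous action on a nonempty
compact Hausdorff space has a fixed point. -/
def ExtremelyAmenable (G : Type*) [Group G] [TopologicalSpace G] : Prop :=
  ∀ (X : Type) [TopologicalSpace X] [CompactSpace X] [T2Space X] [Nonempty X]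
    [MulAction G X], ContinuousSMul G X → ∃ x : X, ∀ g : G, g • x = x

/-- A topological group is amenable if every continuous action on a nonempty compact
Hausdorff space supports an invariant Borel probability measure. -/
def AmenableGroup (G : Type*) [Group G] [TopologicalSpace G] : Prop :=
  ∀ (X : Type) [TopologicalSpace X] [CompactSpace X] [T2Space X] [Nonempty X]
    [MulAction G X], ContinuousSMul G X →
    letI : MeasurableSpace X := borel X
    ∃ μ : MeasureTheory.Measure X, MeasureTheory.IsProbabilityMeasure μ ∧
      ∀ g : G, MeasureTheory.Measure.map (fun p => g • p) μ = μ

/-- Uniform local finiteness: substructures generated by `n` elements have size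
bounded by a function of `n`. -/
def IsULF (L : FirstOrder.Language.{u, v}) (N : Type*) [L.Structure N] : Prop :=
  ∃ f : ℕ → ℕ, ∀ s : Finset N, Nat.card (Substructure.closure L (s : Set N)) ≤ f s.card

/-- `K` is (the universal class given by) the age of a countable uniformly locally
finite structure. -/
def IsAgeOfCountableULF (K : Set (Bundled.{0} L.Structure)) : Prop :=
  ∃ N : Bundled.{0} L.Structure, Countable N ∧ IsULF L N ∧ K = L.age N

/-!
Fix `A` and `i : A ↪[L] A'` as in the Ramsey hypothesis. Given extensions `f₁ : A' ↪[L] B₁` and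
`f₂ : A' ↪[L] B₂`, embed `B₁` and `B₂` into a common `C`, take `D` with `D → (C)^A_2`, and colour a
copy of `A` in `D` according to whether it is the image of `f₂.comp i` under an embedding of `B₂`.
A monochromatic copy of `C` shows that `f₁.comp i` and `f₂.comp i` can be amalgamated after twisting
one of them by an automorphism `σ` of `A`.

To remove the twist, let `H(a)`, for an embedding `a : A ↪[L] B`, be the set of automorphisms `σ`
for which `a` and `a.comp σ` can be amalgamated. `H` can only shrink when `B` is extended, so,
as `A` has finitely many automorphisms, we may extend `A'` until `H` no longer changes. Let `s` be
an amalgam of `f₁.comp i` with `(f₂.comp i).comp σ`. Then `σ` belongs to `H(i)`, hence to `H(s)`.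
Amalgamating `s` with `s.comp σ`, and reading the first through `B₂` and the second through `B₁`,
yields an amalgam of `(f₂.comp i).comp σ` with `(f₁.comp i).comp σ`, where `σ` cancels.
-/

universe w

section Embeddings

variable {M M' N : Type*} [L.Structure M] [L.Structure M'] [L.Structure N]

theorem comp_equiv_right_cancel {f g : M ↪[L] N} (σ : M' ≃[L] M)
    (h : f.comp σ.toEmbedding = g.comp σ.toEmbedding) : f = g := by
  ext x
  simpa using DFunLike.congr_fun h (σ.symm x)

theorem exists_equiv_comp_eq_of_range_eq {f : M ↪[L] N} {g : M' ↪[L] N}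
    (h : f.toHom.range = g.toHom.range) : ∃ σ : M ≃[L] M', f = g.comp σ.toEmbedding := by
  obtain ⟨e, he⟩ : ∃ e : f.toHom.range ≃[L] g.toHom.range, ∀ x, (e x : N) = x :=
    h ▸ ⟨Language.Equiv.refl L _, fun _ => rfl⟩
  refine ⟨g.equivRange.symm.comp (e.comp f.equivRange), Embedding.ext fun x => ?_⟩
  calc f x = e (f.equivRange x) := (he (f.equivRange x)).symm
    _ = g.equivRange (g.equivRange.symm (e (f.equivRange x))) := by
      rw [Language.Equiv.apply_symm_apply]

end Embeddings

section Amalgamation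

variable {K : Set (Bundled.{w} L.Structure)} {A A' B C B' C' : Type*}
  [L.Structure A] [L.Structure A'] [L.Structure B] [L.Structure C] [L.Structure B'] [L.Structure C']

/-- The embeddings `a` and `b` of `A` have an amalgam in `K`. -/
def Amalgamable (K : Set (Bundled.{w} L.Structure)) (a : A ↪[L] B) (b : A ↪[L] C) : Prop :=
  ∃ (D : Bundled.{w} L.Structure) (g : B ↪[L] D) (h : C ↪[L] D), D ∈ K ∧ g.comp a = h.comp b

/-- The condition on the extension `i : A ↪[L] A'` that `WeakAmalgamation` requires. -/
def WeaklyAmalgamates (K : Set (Bundled.{w} L.Structure)) (i : A ↪[L] A') : Prop :=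
  ∀ (B₁ B₂ : Bundled.{w} L.Structure) (f₁ : A' ↪[L] B₁) (f₂ : A' ↪[L] B₂),
    B₁ ∈ K → B₂ ∈ K → Amalgamable K (f₁.comp i) (f₂.comp i)

/-- The weakening of `WeaklyAmalgamates` in which one of the two embeddings of `A` may first be
twisted by an automorphism of `A`. -/
def WeaklyAmalgamatesUpToAut (K : Set (Bundled.{w} L.Structure)) (i : A ↪[L] A') : Prop :=
  ∀ (B₁ B₂ : Bundled.{w} L.Structure) (f₁ : A' ↪[L] B₁) (f₂ : A' ↪[L] B₂),
    B₁ ∈ K → B₂ ∈ K →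
      ∃ σ : A ≃[L] A, Amalgamable K (f₁.comp i) ((f₂.comp i).comp σ.toEmbedding)

/-- The automorphisms `σ` of `A` such that `a` can be amalgamated with its twist by `σ`. The
argument extends `A'` until this set is as small as possible. -/
def selfAmalgamations (K : Set (Bundled.{w} L.Structure)) (a : A ↪[L] B) : Set (A ≃[L] A) :=
  {σ | Amalgamable K a (a.comp σ.toEmbedding)}

theorem Amalgamable.of_comp {a : A ↪[L] B} {b : A ↪[L] C} {f : B ↪[L] B'} {g : C ↪[L] C'}
    (h : Amalgamable K (f.comp a) (g.comp b)) : Amalgamable K a b :=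
  let ⟨D, f', g', hD, hfg⟩ := h
  ⟨D, f'.comp f, g'.comp g, hD, hfg⟩

theorem selfAmalgamations_comp_subset (f : B ↪[L] C) (a : A ↪[L] B) :
    selfAmalgamations K (f.comp a) ⊆ selfAmalgamations K a :=
  fun σ hσ => Amalgamable.of_comp (b := a.comp σ.toEmbedding) (g := f) hσ

theorem exists_selfAmalgamations_stable [Finite (A ≃[L] A)] {A' : Bundled.{w} L.Structure}
    (hA' : A' ∈ K) (i : A ↪[L] A') :
    ∃ B ∈ K, ∃ f : A' ↪[L] B, ∀ C ∈ K, ∀ g : B ↪[L] C,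
      selfAmalgamations K (f.comp i) ⊆ selfAmalgamations K (g.comp (f.comp i)) := by
  obtain ⟨⟨B, f⟩, hB, hmin⟩ := exists_minimalFor_of_wellFoundedLT
    (fun E : Σ B : Bundled.{w} L.Structure, A' ↪[L] B => E.1 ∈ K)
    (fun E => selfAmalgamations K (E.2.comp i)) ⟨⟨A', Embedding.refl L A'⟩, hA'⟩
  exact ⟨B, hB, f, fun C hC g =>
    hmin (j := ⟨C, g.comp f⟩) hC (selfAmalgamations_comp_subset g (f.comp i))⟩

theorem WeaklyAmalgamatesUpToAut.comp {i : A ↪[L] A'} (hi : WeaklyAmalgamatesUpToAut K i)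
    (f : A' ↪[L] B) : WeaklyAmalgamatesUpToAut K (f.comp i) :=
  fun B₁ B₂ f₁ f₂ => hi B₁ B₂ (f₁.comp f) (f₂.comp f)

theorem WeaklyAmalgamatesUpToAut.weaklyAmalgamates {i : A ↪[L] A'}
    (hi : WeaklyAmalgamatesUpToAut K i)
    (hstable : ∀ C ∈ K, ∀ g : A' ↪[L] C, selfAmalgamations K i ⊆ selfAmalgamations K (g.comp i)) :
    WeaklyAmalgamates K i := by
  intro B₁ B₂ f₁ f₂ hB₁ hB₂
  obtain ⟨σ, S, g₁, g₂, hS, hg⟩ := hi B₁ B₂ f₁ f₂ hB₁ hB₂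
  have hσi : σ ∈ selfAmalgamations K i :=
    Amalgamable.of_comp (f := f₁) (g := f₂) ⟨S, g₁, g₂, hS, hg⟩
  obtain ⟨T, u, v, hT, huv⟩ := hstable S hS (g₁.comp f₁) hσi
  refine ⟨T, v.comp g₁, u.comp g₂, hT, comp_equiv_right_cancel σ ?_⟩
  calc v.comp (((g₁.comp f₁).comp i).comp σ.toEmbedding)
    _ = u.comp (g₁.comp (f₁.comp i)) := huv.symm
    _ = u.comp (g₂.comp ((f₂.comp i).comp σ.toEmbedding)) := by rw [hg]

theorem WeaklyAmalgamatesUpToAut.exists_weaklyAmalgamates [Finite (A ≃[L] A)]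
    {A' : Bundled.{w} L.Structure} (hA' : A' ∈ K) {i : A ↪[L] A'}
    (hi : WeaklyAmalgamatesUpToAut K i) :
    ∃ B ∈ K, ∃ f : A' ↪[L] B, WeaklyAmalgamates K (f.comp i) := by
  obtain ⟨B, hB, f, hstable⟩ := exists_selfAmalgamations_stable hA' i
  exact ⟨B, hB, f, (hi.comp f).weaklyAmalgamates hstable⟩

end Amalgamation

section Ramsey

variable {K : Set (Bundled.{0} L.Structure)} {A C D : Bundled.{0} L.Structure}

/-- The partition relation `C → (B)^A_2`. A colouring is defined on all substructures of `C`, but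
only its values on copies of `A` matter. -/
def RamseyArrow (A B C : Bundled.{0} L.Structure) : Prop :=
  ∀ ξ : L.Substructure C → Fin 2,
    ∃ B' ∈ copies B C, ∀ S₁ ∈ copies A C, ∀ S₂ ∈ copies A C, S₁ ≤ B' → S₂ ≤ B' → ξ S₁ = ξ S₂

theorem RamseyArrow.exists_embedding (h : RamseyArrow A C D) (P : Set (L.Substructure D)) :
    ∃ k : C ↪[L] D, ∀ a b : A ↪[L] C,
      (k.comp a).toHom.range ∈ P ↔ (k.comp b).toHom.range ∈ P := by
  classical
  obtain ⟨C', ⟨e⟩, hmono⟩ := h fun S => if S ∈ P then 1 else 0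
  let k : C ↪[L] D := C'.subtype.comp e.toEmbedding
  have range_mem_copies (a : A ↪[L] C) : (k.comp a).toHom.range ∈ copies A D :=
    ⟨(k.comp a).equivRange⟩
  have range_le (a : A ↪[L] C) : (k.comp a).toHom.range ≤ C' := by
    rintro _ ⟨x, rfl⟩
    exact (e (a x)).2
  refine ⟨k, fun a b => ?_⟩
  have same_colour :=
    hmono _ (range_mem_copies a) _ (range_mem_copies b) (range_le a) (range_le b)
  split_ifs at same_colour <;> simp_all

theorem RamseyArrow.exists_amalgamable_comp_aut (h : RamseyArrow A C D) (hD : D ∈ K)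
    {B₁ B₂ : Type*} [L.Structure B₁] [L.Structure B₂] (a₁ : A ↪[L] B₁) (a₂ : A ↪[L] B₂)
    (g₁ : B₁ ↪[L] C) (g₂ : B₂ ↪[L] C) :
    ∃ σ : A ≃[L] A, Amalgamable K a₁ (a₂.comp σ.toEmbedding) := by
  obtain ⟨k, hk⟩ := h.exists_embedding {S | ∃ g : B₂ ↪[L] D, S = (g.comp a₂).toHom.range}
  obtain ⟨g, hg⟩ := (hk (g₁.comp a₁) (g₂.comp a₂)).2 ⟨k.comp g₂, rfl⟩
  obtain ⟨σ, hσ⟩ := exists_equiv_comp_eq_of_range_eq hg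
  exact ⟨σ, D, k.comp g₁, g, hD, hσ⟩

theorem weaklyAmalgamatesUpToAut_of_ramseyArrow (hK : JointEmbedding K)
    {A' : Type*} [L.Structure A'] (i : A ↪[L] A')
    (hR : ∀ B₁ ∈ K, Nonempty (A' ↪[L] B₁) → ∃ B₂ ∈ K, RamseyArrow A B₁ B₂) :
    WeaklyAmalgamatesUpToAut K i := by
  intro B₁ B₂ f₁ f₂ hB₁ hB₂
  obtain ⟨C, hC, ⟨g₁⟩, ⟨g₂⟩⟩ := hK B₁ hB₁ B₂ hB₂
  obtain ⟨D, hD, hCD⟩ := hR C hC ⟨g₁.comp f₁⟩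
  exact hCD.exists_amalgamable_comp_aut hD (f₁.comp i) (f₂.comp i) g₁ g₂

end Ramsey

theorem statement3_general (K : Set (Bundled.{0} L.Structure)) (hK : JointEmbedding K)
    (hfin : ∀ A ∈ K, Finite (A ≃[L] A))
    (hR : ∀ A ∈ K, ∃ A' ∈ K, Nonempty (A ↪[L] A') ∧
      ∀ B₁ ∈ K, Nonempty (A' ↪[L] B₁) → ∃ B₂ ∈ K, RamseyArrow A B₁ B₂) :
    WeakAmalgamation K := by
  intro A hA
  have := hfin A hA
  obtain ⟨A', hA', ⟨i⟩, hA'R⟩ := hR A hA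
  obtain ⟨B, hB, f, hf⟩ :=
    (weaklyAmalgamatesUpToAut_of_ramseyArrow hK i hA'R).exists_weaklyAmalgamates hA'
  exact ⟨B, f.comp i, hB, hf⟩

/-- If `K` has the Ramsey-type property (every `A` extends to `A'` such that every
extension `B₁` of `A'` has an extension `B₂` with `B₂ → (B₁)^A_2`), then `K` has the
weak amalgamation property. -/
theorem statement3 (L : FirstOrder.Language.{u, v}) [L.IsRelational]
    (hL : Countable (Σ n, L.Relations n))
    (K : Set (Bundled.{0} L.Structure)) (hK : IsAgeOfCountableULF K)
    (hR : ∀ A ∈ K, ∃ A' ∈ K, Nonempty (A ↪[L] A') ∧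
      ∀ B₁ ∈ K, Nonempty (A' ↪[L] B₁) →
        ∃ B₂ ∈ K, Nonempty (B₁ ↪[L] B₂) ∧
          ∀ ξ : L.Substructure B₂ → Fin 2,
            ∃ B' ∈ copies B₁ B₂, ∀ S₁ ∈ copies A B₂, ∀ S₂ ∈ copies A B₂,
              S₁ ≤ B' → S₂ ≤ B' → ξ S₁ = ξ S₂) :
    WeakAmalgamation K := by
  obtain ⟨N, -, -, rfl⟩ := hK
  refine statement3_general _ (age.jointEmbedding N)
    (fun A hA => have : Finite A := hA.1.finite; DFunLike.finite _) fun A hA => ?_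
  exact (hR A hA).imp fun A' => And.imp_right <| And.imp_right fun hA' B₁ hB₁ hA'B₁ =>
    (hA' B₁ hB₁ hA'B₁).imp fun _ => And.imp_right And.right

end Paper
end

section
/- K satisfies Truss' condition if and only if there exists a cofinal subfamily C ⊆ K which satisfies the joint embedding property and the amalgamation property. -/
open FirstOrder FirstOrder.Language CategoryTheory Set

universe u v

namespace Paper


variable {L : FirstOrder.Language.{u, v}}

variable {L : FirstOrder.Language.{u, v}}

/-!
If Truss' condition holds, the amalgamation bases of `K` form a cofinal subfamily, which inherits
joint embedding and has amalgamation: find the common extension in `K`, then extend it to a base.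
Conversely, every member `A` of a cofinal subfamily with amalgamation is an amalgamation base of
`K`: extend the two given extensions of `A` into the subfamily and amalgamate there.
-/

section

variable {K C : Set (Bundled.{0} L.Structure)} {A : Bundled.{0} L.Structure}

theorem IsAgeOfCountableULF.jointEmbedding (hK : IsAgeOfCountableULF K) : JointEmbedding K := by
  obtain ⟨N, -, -, rfl⟩ := hK
  exact age.jointEmbedding N

theorem trussCondition_iff_isCofinalIn :
    TrussCondition K ↔ IsCofinalIn {A | IsAmalgamationBase K A} K :=
  ⟨fun hT => ⟨fun _ hA => hA.1, hT⟩, fun hC => hC.2⟩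

namespace IsCofinalIn

theorem jointEmbedding (hC : IsCofinalIn C K) (hK : JointEmbedding K) : JointEmbedding C := by
  intro A hA B hB
  obtain ⟨D, hD, ⟨f⟩, ⟨g⟩⟩ := hK A (hC.1 hA) B (hC.1 hB)
  obtain ⟨E, hE, ⟨h⟩⟩ := hC.2 D hD
  exact ⟨E, hE, ⟨h.comp f⟩, ⟨h.comp g⟩⟩

theorem amalgamation_of_isAmalgamationBase (hC : IsCofinalIn C K)
    (hbase : ∀ A ∈ C, IsAmalgamationBase K A) :
    Amalgamation C := by
  intro A B₁ B₂ f₁ f₂ hA hB₁ hB₂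
  obtain ⟨D, g₁, g₂, hD, hg⟩ := (hbase A hA).2 B₁ B₂ f₁ f₂ (hC.1 hB₁) (hC.1 hB₂)
  obtain ⟨E, hE, ⟨h⟩⟩ := hC.2 D hD
  refine ⟨E, h.comp g₁, h.comp g₂, hE, ?_⟩
  rw [Embedding.comp_assoc, hg, Embedding.comp_assoc]

theorem isAmalgamationBase (hC : IsCofinalIn C K) (hamalg : Amalgamation C) (hA : A ∈ C) :
    IsAmalgamationBase K A := by
  refine ⟨hC.1 hA, fun B₁ B₂ f₁ f₂ hB₁ hB₂ => ?_⟩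
  obtain ⟨E₁, hE₁, ⟨e₁⟩⟩ := hC.2 B₁ hB₁
  obtain ⟨E₂, hE₂, ⟨e₂⟩⟩ := hC.2 B₂ hB₂
  obtain ⟨D, g₁, g₂, hD, hg⟩ := hamalg A E₁ E₂ (e₁.comp f₁) (e₂.comp f₂) hA hE₁ hE₂
  refine ⟨D, g₁.comp e₁, g₂.comp e₂, hC.1 hD, ?_⟩
  rw [Embedding.comp_assoc, hg, Embedding.comp_assoc]

theorem trussCondition (hC : IsCofinalIn C K) (hamalg : Amalgamation C) : TrussCondition K := by
  intro A hA
  obtain ⟨B, hB, hAB⟩ := hC.2 A hA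
  exact ⟨B, hC.isAmalgamationBase hamalg hB, hAB⟩

end IsCofinalIn

theorem statement4_general (hK : JointEmbedding K) :
    TrussCondition K ↔
      ∃ C : Set (Bundled.{0} L.Structure),
        IsCofinalIn C K ∧ JointEmbedding C ∧ Amalgamation C := by
  constructor
  · intro hT
    have hbases := trussCondition_iff_isCofinalIn.mp hT
    exact ⟨_, hbases, hbases.jointEmbedding hK,
      hbases.amalgamation_of_isAmalgamationBase fun _ hA => hA⟩
  · rintro ⟨C, hC, -, hamalg⟩
    exact hC.trussCondition hamalg

end

/-- `K` satisfies Truss' condition iff there is a cofinal subfamily `C ⊆ K`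
with the joint embedding property and the amalgamation property. -/
theorem statement4 (L : FirstOrder.Language.{u, v}) [L.IsRelational]
    (hL : Countable (Σ n, L.Relations n))
    (K : Set (Bundled.{0} L.Structure)) (hK : IsAgeOfCountableULF K) :
    TrussCondition K ↔
      ∃ C : Set (Bundled.{0} L.Structure),
        IsCofinalIn C K ∧ JointEmbedding C ∧ Amalgamation C :=
  statement4_general hK.jointEmbedding

end Paper
end
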